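/- arXiv:1004.3299 — 3 statements merged into one kernel-verified Lean document; each statement's English description precedes it below -/
import Mathlib

section
/- Let η := limsup_{x→∞} g(x)/x. Then limsup_{x→∞} h(x)/x = η, and the right derivative h'₊ of h (which exists everywhere on (0,∞) and is nonincreasing, since h is concave) satisfies lim_{x→∞} h'₊(x) = η. -/
open Set Filter

/-- With `h` the smallest concave, nonnegative, nondecreasing majorant of `g` and
`η := limsup_{x→∞} g(x)/x`, we have `limsup_{x→∞} h(x)/x = η`, and the right derivative of `h`
(which exists everywhere on `(0,∞)` and is nonincreasing) tends to `η` at infinity. -/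
theorem limsup_smallest_concave_majorant
    (g : ℝ → ℝ) (M : ℝ) (hM : 0 < M)
    (hg_cont : ContinuousOn g (Ici 0))
    (hg_nonneg : ∀ x ∈ Ici (0 : ℝ), 0 ≤ g x)
    (hg_growth : ∀ x ∈ Ici (0 : ℝ), g x ≤ M * (1 + x))
    (F : Set (ℝ → ℝ))
    (hF : F = {f | ConcaveOn ℝ (Ici 0) f ∧ MonotoneOn f (Ici 0) ∧
      (∀ x ∈ Ici (0 : ℝ), 0 ≤ f x) ∧ (∀ x ∈ Ici (0 : ℝ), g x ≤ f x)})
    (h : ℝ → ℝ)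
    (hh : ∀ x, h x = sInf ((fun f : ℝ → ℝ => f x) '' F))
    (η : ℝ)
    (hη : η = Filter.limsup (fun x => g x / x) Filter.atTop) :
    Filter.limsup (fun x => h x / x) Filter.atTop = η ∧
    ∃ d : ℝ → ℝ,
      (∀ x ∈ Ioi (0 : ℝ), HasDerivWithinAt h (d x) (Ioi x) x) ∧
      AntitoneOn d (Ioi 0) ∧
      Tendsto d atTop (nhds η) := by
  have hFne : ∀ c ε : ℝ, 0 ≤ c → 0 ≤ ε → (∀ x ∈ Ici (0 : ℝ), g x ≤ c + ε * x) →
      (fun x => c + ε * x) ∈ F := by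
    intro c ε hc hε hle
    rw [hF]
    refine ⟨⟨convex_Ici 0, ?_⟩, ?_, ?_, hle⟩
    · intro x _ y _ a b _ _ hab
      simp only [smul_eq_mul]
      have : b = 1 - a := by linarith
      subst this
      apply le_of_eq
      ring
    · intro x _ y _ hxy
      have := mul_le_mul_of_nonneg_left hxy hε
      simp only
      linarith
    · intro x hx
      have := mul_nonneg hε (mem_Ici.1 hx)
      simp only
      linarith
  have hmemM := hFne M M hM.le hM.le (fun x hx => by have := hg_growth x hx; linarith)
  have hle : ∀ f ∈ F, ∀ x ∈ Ici (0 : ℝ), h x ≤ f x := by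
    intro f hf x hx
    rw [hh]
    refine csInf_le ⟨0, ?_⟩ ⟨f, hf, rfl⟩
    rintro _ ⟨k, hk, rfl⟩
    rw [hF] at hk
    exact hk.2.2.1 x hx
  have hge : ∀ x, ∀ c, (∀ f ∈ F, c ≤ f x) → c ≤ h x := by
    intro x c hc
    rw [hh]
    refine le_csInf ⟨_, _, hmemM, rfl⟩ ?_
    rintro _ ⟨k, hk, rfl⟩
    exact hc k hk
  have hconc : ConcaveOn ℝ (Ici 0) h := by
    refine ⟨convex_Ici 0, ?_⟩
    intro x hx y hy a b ha hb hab
    apply hge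
    intro f hf
    have h1 := mul_le_mul_of_nonneg_left (hle f hf x hx) ha
    have h2 := mul_le_mul_of_nonneg_left (hle f hf y hy) hb
    rw [hF] at hf
    have h3 := hf.1.2 hx hy ha hb hab
    simp only [smul_eq_mul] at h3 ⊢
    linarith
  have hgh : ∀ x ∈ Ici (0 : ℝ), g x ≤ h x := by
    intro x hx
    apply hge
    intro f hf
    rw [hF] at hf
    exact hf.2.2.2 x hx
  have hbdd : IsBoundedUnder (· ≤ ·) atTop (fun x => g x / x) := by
    refine ⟨2 * M, ?_⟩
    rw [eventually_map]
    filter_upwards [eventually_ge_atTop (1 : ℝ)] with x hx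
    have := hg_growth x (mem_Ici.2 (by linarith))
    rw [div_le_iff₀ (by linarith)]
    nlinarith
  have hev0 : ∀ᶠ x in atTop, 0 ≤ g x / x := by
    filter_upwards [eventually_ge_atTop (1 : ℝ)] with x hx
    exact div_nonneg (hg_nonneg x (mem_Ici.2 (by linarith))) (by linarith)
  have hη0 : 0 ≤ η := by
    rw [hη]
    exact le_limsup_of_frequently_le hev0.frequently hbdd
  have hcob : IsCoboundedUnder (· ≤ ·) atTop (fun x => g x / x) :=
    IsBoundedUnder.isCoboundedUnder_le ⟨0, by rw [eventually_map]; exact hev0⟩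
  -- upper bound
  have hup : ∀ ε > 0, ∀ᶠ x in atTop, h x / x < η + ε := by
    intro ε hε
    have h1 := eventually_lt_of_limsup_lt
      (show limsup (fun x => g x / x) atTop < η + ε / 2 by rw [← hη]; linarith) hbdd
    obtain ⟨N, hN⟩ := eventually_atTop.1 (h1.and (eventually_ge_atTop (1 : ℝ)))
    have hN1 : 1 ≤ N := (hN N le_rfl).2
    have hmem := hFne (M * (1 + N)) (η + ε / 2) (by positivity) (by positivity) (by
      intro x hx
      have hx0 : 0 ≤ x := hx
      have hp : 0 ≤ (η + ε / 2) * x := by positivity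
      rcases le_total x N with hxN | hxN
      · have := hg_growth x hx
        nlinarith
      · have h2 := (hN x hxN).1
        rw [div_lt_iff₀ (by linarith)] at h2
        have : 0 ≤ M * (1 + N) := by positivity
        linarith)
    have hlim : Tendsto (fun x : ℝ => M * (1 + N) / x) atTop (nhds 0) :=
      tendsto_const_nhds.div_atTop tendsto_id
    filter_upwards [hlim.eventually (gt_mem_nhds (half_pos hε)), eventually_gt_atTop (0 : ℝ)]
      with x hx hx0
    have h3 := hle _ hmem x (mem_Ici.2 hx0.le)
    rw [div_lt_iff₀ hx0] at hx ⊢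
    linarith
  have hd : ∀ x ∈ Ioi (0 : ℝ), HasDerivWithinAt h (derivWithin h (Ioi x) x) (Ioi x) x := by
    intro x hx
    have h1 := hconc.neg.differentiableWithinAt_Ioi_of_mem_interior
      (x := x) (by rw [interior_Ici]; exact hx)
    have h2 := h1.neg
    rw [neg_neg] at h2
    exact h2.hasDerivWithinAt
  have hdup : ∀ x ∈ Ioi (0 : ℝ), ∀ z ∈ Ico 0 x, derivWithin h (Ioi x) x ≤ slope h z x := by
    intro x hx z hz
    have ht := (hasDerivWithinAt_iff_tendsto_slope' self_notMem_Ioi).mp (hd x hx)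
    apply le_of_tendsto ht
    filter_upwards [self_mem_nhdsWithin] with y hy
    rw [slope_def_field, slope_def_field]
    exact hconc.slope_anti_adjacent hz.1 (mem_Ici.2 ((mem_Ioi.1 hx).trans hy).le) hz.2 hy
  have hdlow : ∀ x ∈ Ioi (0 : ℝ), ∀ y ∈ Ioi x, slope h x y ≤ derivWithin h (Ioi x) x := by
    intro x hx y hy
    exact hconc.slope_le_of_hasDerivWithinAt_Ioi (mem_Ici.2 (mem_Ioi.1 hx).le)
      (mem_Ici.2 ((mem_Ioi.1 hx).trans hy).le) hy (hd x hx)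
  have hdη : ∀ x ∈ Ioi (0 : ℝ), η ≤ derivWithin h (Ioi x) x := by
    intro x hx
    set D := derivWithin h (Ioi x) x with hD
    apply le_of_forall_pos_le_add
    intro ε hε
    rw [hη]
    apply limsup_le_of_le hcob
    have hlim : Tendsto (fun y : ℝ => (h x - D * x) / y) atTop (nhds 0) :=
      tendsto_const_nhds.div_atTop tendsto_id
    filter_upwards [hlim.eventually (gt_mem_nhds hε), eventually_gt_atTop x] with y hy hxy
    have hy0 : 0 < y := (mem_Ioi.1 hx).trans hxy
    have h1 := hdlow x hx y hxy
    rw [slope_def_field, div_le_iff₀ (by linarith)] at h1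
    have h2 := hgh y (mem_Ici.2 hy0.le)
    rw [div_lt_iff₀ hy0] at hy
    rw [div_le_iff₀ hy0]
    linarith
  have hdh : ∀ x ∈ Ioi (0 : ℝ), derivWithin h (Ioi x) x ≤ h x / x := by
    intro x hx
    have hx0 : 0 < x := hx
    refine (hdup x hx 0 ⟨le_rfl, hx⟩).trans ?_
    rw [slope_def_field, sub_zero]
    have h0 : 0 ≤ h 0 := (hg_nonneg 0 self_mem_Ici).trans (hgh 0 self_mem_Ici)
    gcongr
    linarith
  refine ⟨?_, fun x => derivWithin h (Ioi x) x, hd, ?_, ?_⟩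
  · apply Tendsto.limsup_eq
    rw [tendsto_order]
    constructor
    · intro a ha
      filter_upwards [eventually_gt_atTop (0 : ℝ)] with x hx
      exact ha.trans_le ((hdη x hx).trans (hdh x hx))
    · intro a ha
      filter_upwards [hup (a - η) (by linarith)] with x hx
      linarith
  · intro x hx y hy hxy
    rcases hxy.eq_or_lt with rfl | hlt
    · exact le_rfl
    · exact (hdup y hy x ⟨(mem_Ioi.1 hx).le, hlt⟩).trans (hdlow x hx y hlt)
  · rw [tendsto_order]
    constructor
    · intro a ha
      filter_upwards [eventually_gt_atTop (0 : ℝ)] with x hx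
      exact ha.trans_le (hdη x hx)
    · intro a ha
      filter_upwards [hup (a - η) (by linarith), eventually_gt_atTop (0 : ℝ)] with x hx hx0
      have := hdh x hx0
      linarith
end

section
/- Let η := limsup_{x→∞} g(x)/x. Then the function f : [0,∞) → ℝ defined by f(x) := h(x) − η x is nondecreasing and concave on [0,∞). -/
open Set Filter

/-- With `h` the smallest concave, nonnegative, nondecreasing majorant of `g` and
`η := limsup_{x→∞} g(x)/x`, the function `x ↦ h(x) − η x` is nondecreasing and concave
on `[0,∞)`. -/
theorem majorant_sub_linear_monotone_concave
    (g : ℝ → ℝ) (M : ℝ) (hM : 0 < M)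
    (hg_cont : ContinuousOn g (Ici 0))
    (hg_nonneg : ∀ x ∈ Ici (0 : ℝ), 0 ≤ g x)
    (hg_growth : ∀ x ∈ Ici (0 : ℝ), g x ≤ M * (1 + x))
    (F : Set (ℝ → ℝ))
    (hF : F = {f | ConcaveOn ℝ (Ici 0) f ∧ MonotoneOn f (Ici 0) ∧
      (∀ x ∈ Ici (0 : ℝ), 0 ≤ f x) ∧ (∀ x ∈ Ici (0 : ℝ), g x ≤ f x)})
    (h : ℝ → ℝ)
    (hh : ∀ x, h x = sInf ((fun f : ℝ → ℝ => f x) '' F))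
    (η : ℝ)
    (hη : η = Filter.limsup (fun x => g x / x) Filter.atTop) :
    MonotoneOn (fun x => h x - η * x) (Ici 0) ∧
    ConcaveOn ℝ (Ici 0) (fun x => h x - η * x) := by
  have hne : F.Nonempty := by
    refine ⟨fun x => M * (1 + x), ?_⟩
    rw [hF]
    refine ⟨⟨convex_Ici 0, ?_⟩, ?_, ?_, hg_growth⟩
    · intro x _ y _ a b _ _ hab
      simp only [smul_eq_mul]
      have : b = 1 - a := by linarith
      subst this
      apply le_of_eq
      ring
    · intro x _ y _ hxy
      simp only
      gcongr
    · intro x hx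
      have : (0 : ℝ) ≤ x := hx
      positivity
  have hle : ∀ f ∈ F, ∀ x ∈ Ici (0 : ℝ), h x ≤ f x := by
    intro f hf x hx
    rw [hh]
    refine csInf_le ⟨0, ?_⟩ ⟨f, hf, rfl⟩
    rintro _ ⟨k, hk, rfl⟩
    rw [hF] at hk
    exact hk.2.2.1 x hx
  have hge : ∀ x c : ℝ, (∀ f ∈ F, c ≤ f x) → c ≤ h x := by
    intro x c hc
    rw [hh]
    refine le_csInf (hne.image _) ?_
    rintro _ ⟨k, hk, rfl⟩
    exact hc k hk
  have hgh : ∀ x ∈ Ici (0 : ℝ), g x ≤ h x := by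
    intro x hx
    refine hge x _ fun f hf => ?_
    rw [hF] at hf
    exact hf.2.2.2 x hx
  have hconc : ConcaveOn ℝ (Ici 0) h := by
    refine ⟨convex_Ici 0, ?_⟩
    intro x hx y hy a b ha hb hab
    refine hge _ _ fun f hf => ?_
    have h1 := hle f hf x hx
    have h2 := hle f hf y hy
    rw [hF] at hf
    refine le_trans ?_ (hf.1.2 hx hy ha hb hab)
    simp only [smul_eq_mul]
    gcongr
  constructor
  · intro x hx y hy hxy
    rcases eq_or_lt_of_le hxy with rfl | hlt
    · exact le_rfl
    by_contra hcon
    simp only [not_le] at hcon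
    have hd : 0 < y - x := by linarith
    obtain ⟨s, hs⟩ : ∃ s, s = (h y - h x) / (y - x) := ⟨_, rfl⟩
    have hsη : s < η := by
      rw [hs, div_lt_iff₀ hd]
      linarith
    obtain ⟨t, hst, htη⟩ := exists_between hsη
    have hx0 : (0 : ℝ) ≤ x := hx
    have hev : ∀ᶠ z in atTop, g z / z ≤ t := by
      filter_upwards [eventually_gt_atTop y, eventually_ge_atTop ((h y - s * y) / (t - s))]
        with z hz hz2
      have hz0 : 0 < z := by linarith
      have hsl := hconc.slope_anti_adjacent hx (show z ∈ Ici (0 : ℝ) from hz0.le) hlt hz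
      rw [← hs, div_le_iff₀ (by linarith)] at hsl
      rw [div_le_iff₀ (by linarith)] at hz2
      rw [div_le_iff₀ hz0]
      have := hgh z hz0.le
      linarith
    have hcob : IsCoboundedUnder (· ≤ ·) atTop (fun x => g x / x) := by
      refine IsBoundedUnder.isCoboundedUnder_le ⟨0, ?_⟩
      rw [eventually_map]
      filter_upwards [eventually_ge_atTop 0] with z hz
      exact div_nonneg (hg_nonneg z hz) hz
    have := limsup_le_of_le hcob hev
    linarith
  · refine ⟨convex_Ici 0, ?_⟩
    intro x hx y hy a b ha hb hab
    have := hconc.2 hx hy ha hb hab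
    simp only [smul_eq_mul] at this ⊢
    linarith
end

section
/- Suppose g : [0,∞) → [0,∞) is continuous with g ≤ h on [0,∞), where h is concave, nonnegative and nondecreasing. Then there exists a family (g^ε)_{ε∈(0,1)} of functions g^ε : [0,∞) → [0,∞) such that, for each ε ∈ (0,1): (i) g^ε is bounded; (ii) g^ε is continuous on [0,∞) and infinitely differentiable on (0,∞); (iii) the first and second derivatives of g^ε have compact support contained in (0,∞); (iv) g^ε(x) ≤ h(x) for all x ≥ 0; and moreover (v) lim_{ε↓0} g^ε(x) = g(x) for every x ≥ 0. -/
open Set Filter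

lemma exists_poly_between (g h : ℝ → ℝ)
    (hg_cont : ContinuousOn g (Ici 0))
    (hg_nonneg : ∀ x ∈ Ici (0 : ℝ), 0 ≤ g x)
    (hh_conc : ConcaveOn ℝ (Ici 0) h)
    (hh_nonneg : ∀ x ∈ Ici (0 : ℝ), 0 ≤ h x)
    (hh_mono : MonotoneOn h (Ici 0))
    (hgh : ∀ x ∈ Ici (0 : ℝ), g x ≤ h x) (ε : ℝ) (hε : ε ∈ Ioo (0 : ℝ) 1) :
    ∃ p : Polynomial ℝ, ∀ x ∈ Icc ε (2 / ε), 0 ≤ p.eval x ∧ p.eval x ≤ h x ∧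
      |p.eval x - g x| ≤ ε * (g x + 1) := by
  obtain ⟨h0, h1⟩ := hε
  rcases (hh_nonneg ε h0.le).eq_or_lt with hm | hm
  · refine ⟨0, fun x hx => ?_⟩
    have hx0 : 0 < x := h0.trans_le hx.1
    have hx1 : h x ≤ 0 := by
      have hd : ε / x ≤ 1 := by rw [div_le_one hx0]; exact hx.1
      have := hh_conc.2 (show x ∈ Ici 0 from hx0.le) (show (0:ℝ) ∈ Ici 0 from le_refl (0:ℝ))
        (show 0 ≤ ε / x by positivity) (show 0 ≤ 1 - ε / x by linarith) (by ring)
      simp only [smul_eq_mul, mul_zero, add_zero] at this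
      rw [div_mul_cancel₀ _ hx0.ne', ← hm] at this
      have h3 : 0 ≤ (1 - ε / x) * h 0 := mul_nonneg (by linarith) (hh_nonneg 0 (le_refl (0:ℝ)))
      by_contra hc
      push Not at hc
      have : 0 < ε / x * h x := by positivity
      linarith
    have hgx : g x = 0 := le_antisymm ((hgh x hx0.le).trans hx1) (hg_nonneg x hx0.le)
    simp [hgx, h0.le, hh_nonneg x hx0.le]
  · set η := min ε (ε * h ε) / 2 with hη
    have hηp : 0 < η := by positivity
    have hη1 : 2 * η ≤ ε := by rw [hη]; linarith [min_le_left ε (ε * h ε)]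
    have hη2 : 2 * η ≤ ε * h ε := by rw [hη]; linarith [min_le_right ε (ε * h ε)]
    have hsub : Icc ε (2 / ε) ⊆ Ici 0 := fun x hx => h0.le.trans hx.1
    obtain ⟨p, hp⟩ := exists_polynomial_near_of_continuousOn ε (2 / ε)
      (fun x => (1 - ε) * g x + η)
      (((hg_cont.mono hsub).const_mul _).add continuousOn_const) η hηp
    refine ⟨p, fun x hx => ?_⟩
    have hx0 := hsub hx
    have := abs_lt.1 (hp x hx)
    have hgx := hg_nonneg x hx0
    have hhx := hgh x hx0
    have hmx : h ε ≤ h x := hh_mono h0.le hx0 hx.1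
    have e1 : 0 ≤ (1 - ε) * g x := mul_nonneg (by linarith) hgx
    have e2 : (1 - ε) * g x ≤ (1 - ε) * h x := mul_le_mul_of_nonneg_left hhx (by linarith)
    have e3 : ε * h ε ≤ ε * h x := mul_le_mul_of_nonneg_left hmx h0.le
    have e4 : 0 ≤ ε * g x := mul_nonneg h0.le hgx
    refine ⟨by linarith, by linarith, abs_le.2 ⟨by linarith, by linarith⟩⟩

lemma exists_approx (g h : ℝ → ℝ)
    (hg_cont : ContinuousOn g (Ici 0))
    (hg_nonneg : ∀ x ∈ Ici (0 : ℝ), 0 ≤ g x)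
    (hh_conc : ConcaveOn ℝ (Ici 0) h)
    (hh_nonneg : ∀ x ∈ Ici (0 : ℝ), 0 ≤ h x)
    (hh_mono : MonotoneOn h (Ici 0))
    (hgh : ∀ x ∈ Ici (0 : ℝ), g x ≤ h x) (ε : ℝ) (hε : ε ∈ Ioo (0 : ℝ) 1) :
    ∃ G : ℝ → ℝ, ContDiff ℝ (⊤ : ℕ∞) G ∧ (∀ x ≤ ε, G x = g 0) ∧
      (∀ x, 2 / ε ≤ x → G x = 0) ∧ (∀ x ∈ Ici (0 : ℝ), 0 ≤ G x ∧ G x ≤ h x) ∧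
      (∀ x, 2 * ε ≤ x → x ≤ 1 / ε → |G x - g x| ≤ ε * (g x + 1)) := by
  obtain ⟨p, hp⟩ := exists_poly_between g h hg_cont hg_nonneg hh_conc hh_nonneg hh_mono hgh ε hε
  obtain ⟨h0, h1⟩ := hε
  have hbig : ε < 2 / ε := by rw [lt_div_iff₀ h0]; nlinarith
  have a0 : ∀ x ≤ ε, Real.smoothTransition ((x - ε) / ε) = 0 := fun x hx =>
    Real.smoothTransition.zero_of_nonpos (div_nonpos_of_nonpos_of_nonneg (by linarith) h0.le)
  have a1 : ∀ x, 2 * ε ≤ x → Real.smoothTransition ((x - ε) / ε) = 1 := fun x hx =>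
    Real.smoothTransition.one_of_one_le (by rw [le_div_iff₀ h0]; linarith)
  have b0 : ∀ x, 2 / ε ≤ x → Real.smoothTransition (2 - ε * x) = 0 := fun x hx =>
    Real.smoothTransition.zero_of_nonpos (by rw [div_le_iff₀ h0] at hx; linarith)
  have b1 : ∀ x, x ≤ 1 / ε → Real.smoothTransition (2 - ε * x) = 1 := fun x hx =>
    Real.smoothTransition.one_of_one_le (by rw [le_div_iff₀ h0] at hx; linarith)
  have h2 : 2 * ε ≤ 2 / ε := by rw [le_div_iff₀ h0]; nlinarith
  have h3 : 1 / ε ≤ 2 / ε := by gcongr; norm_num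
  refine ⟨fun x => (1 - Real.smoothTransition ((x - ε) / ε)) * g 0 +
    Real.smoothTransition ((x - ε) / ε) * (Real.smoothTransition (2 - ε * x) * p.eval x),
    ?_, ?_, ?_, ?_, ?_⟩
  · have c1 : ContDiff ℝ (⊤ : ℕ∞) (fun x : ℝ => Real.smoothTransition ((x - ε) / ε)) :=
      Real.smoothTransition.contDiff.comp ((contDiff_id.sub contDiff_const).div_const _)
    have c2 : ContDiff ℝ (⊤ : ℕ∞) (fun x : ℝ => Real.smoothTransition (2 - ε * x)) :=
      Real.smoothTransition.contDiff.comp (contDiff_const.sub (contDiff_const.mul contDiff_id))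
    have c3 : ContDiff ℝ (⊤ : ℕ∞) (fun x : ℝ => p.eval x) := by
      simpa using p.contDiff_aeval (𝕜 := ℝ) (⊤ : ℕ∞)
    exact ((contDiff_const.sub c1).mul contDiff_const).add (c1.mul (c2.mul c3))
  · intro x hx
    simp [a0 x hx]
  · intro x hx
    simp [a1 x (h2.trans hx), b0 x hx]
  · intro x hx
    have hg0 := hg_nonneg 0 (le_refl (0:ℝ))
    have hg1 : g 0 ≤ h x := (hgh 0 (le_refl (0:ℝ))).trans (hh_mono (le_refl (0:ℝ)) hx hx)
    have hhx := hh_nonneg x hx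
    rcases le_total x ε with hc | hc
    · simp [a0 x hc, hg0, hg1]
    rcases le_total (2 / ε) x with hd | hd
    · simp [a1 x (h2.trans hd), b0 x hd, hhx]
    obtain ⟨q0, q1, -⟩ := hp x ⟨hc, hd⟩
    beta_reduce
    have t0 := Real.smoothTransition.nonneg ((x - ε) / ε)
    have t1 := Real.smoothTransition.le_one ((x - ε) / ε)
    have s0 := Real.smoothTransition.nonneg (2 - ε * x)
    have s1 := Real.smoothTransition.le_one (2 - ε * x)
    generalize Real.smoothTransition ((x - ε) / ε) = t at *
    generalize Real.smoothTransition (2 - ε * x) = s at *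
    have r0 : 0 ≤ s * p.eval x := mul_nonneg s0 q0
    have r1 : s * p.eval x ≤ h x := (mul_le_of_le_one_left q0 s1).trans q1
    have t2 : 0 ≤ 1 - t := by linarith
    refine ⟨add_nonneg (mul_nonneg t2 hg0) (mul_nonneg t0 r0), ?_⟩
    have := mul_le_mul_of_nonneg_left hg1 t2
    have := mul_le_mul_of_nonneg_left r1 t0
    linarith
  · intro x hx hx'
    simpa [a1 x hx, b1 x hx'] using (hp x ⟨by linarith, hx'.trans h3⟩).2.2

/-- Approximation of a continuous payoff `g` dominated by a concave, nonnegative,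
nondecreasing function `h` by a family `(g^ε)_{ε ∈ (0,1)}` of bounded functions, smooth on
`(0,∞)`, whose first and second derivatives have compact support in `(0,∞)`, each dominated by
`h`, and converging pointwise to `g` as `ε ↓ 0`. -/
theorem approximation_of_payoff
    (g h : ℝ → ℝ)
    (hg_cont : ContinuousOn g (Ici 0))
    (hg_nonneg : ∀ x ∈ Ici (0 : ℝ), 0 ≤ g x)
    (hh_conc : ConcaveOn ℝ (Ici 0) h)
    (hh_nonneg : ∀ x ∈ Ici (0 : ℝ), 0 ≤ h x)
    (hh_mono : MonotoneOn h (Ici 0))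
    (hgh : ∀ x ∈ Ici (0 : ℝ), g x ≤ h x) :
    ∃ G : ℝ → ℝ → ℝ,
      (∀ ε ∈ Ioo (0 : ℝ) 1,
        -- (i) `g^ε` is bounded
        (∃ C : ℝ, ∀ x ∈ Ici (0 : ℝ), |G ε x| ≤ C) ∧
        -- `g^ε` maps `[0,∞)` to `[0,∞)` and is continuous there
        (∀ x ∈ Ici (0 : ℝ), 0 ≤ G ε x) ∧
        ContinuousOn (G ε) (Ici 0) ∧
        -- (ii) `g^ε` is infinitely differentiable on `(0,∞)`
        ContDiffOn ℝ (⊤ : ℕ∞) (G ε) (Ioi 0) ∧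
        -- (iii) the first and second derivatives have compact support contained in `(0,∞)`
        (∃ K : Set ℝ, IsCompact K ∧ K ⊆ Ioi 0 ∧
          ∀ x ∈ Ioi (0 : ℝ), x ∉ K →
            deriv (G ε) x = 0 ∧ deriv (deriv (G ε)) x = 0) ∧
        -- (iv) `g^ε ≤ h`
        (∀ x ∈ Ici (0 : ℝ), G ε x ≤ h x)) ∧
      -- (v) pointwise convergence to `g` as `ε ↓ 0`
      (∀ x ∈ Ici (0 : ℝ),
        Tendsto (fun ε => G ε x) (nhdsWithin 0 (Ioi 0)) (nhds (g x))) := by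
  have key := exists_approx g h hg_cont hg_nonneg hh_conc hh_nonneg hh_mono hgh
  choose! G hG using key
  refine ⟨G, fun ε hε => ?_, fun x hx => ?_⟩
  · obtain ⟨hs, hl, hr, hb, -⟩ := hG ε hε
    have locconst : ∀ (x c : ℝ), G ε =ᶠ[nhds x] (fun _ => c) →
        deriv (G ε) x = 0 ∧ deriv (deriv (G ε)) x = 0 := by
      intro x c hc
      have hd := hc.deriv
      constructor
      · rw [hc.deriv_eq]; simp
      · rw [hd.deriv_eq]; simp
    refine ⟨?_, fun x hx => (hb x hx).1, hs.continuous.continuousOn, hs.contDiffOn,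
      ⟨Icc ε (2 / ε), isCompact_Icc, fun x hx => hε.1.trans_le hx.1, ?_⟩,
      fun x hx => (hb x hx).2⟩
    · obtain ⟨C, hC⟩ := (isCompact_Icc (a := (0:ℝ)) (b := 2 / ε)).exists_bound_of_continuousOn
        hs.continuous.continuousOn
      refine ⟨max C 0, fun x hx => ?_⟩
      rcases le_total x (2 / ε) with hc | hc
      · exact (hC x ⟨hx, hc⟩).trans (le_max_left _ _)
      · rw [hr x hc]; simp
    · intro x _ hx
      rcases lt_or_ge x ε with hc | hc
      · apply locconst x (g 0)
        filter_upwards [Iio_mem_nhds hc] with y hy using hl y (le_of_lt hy)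
      · have hc' : 2 / ε < x := by
          by_contra hcon
          exact hx ⟨hc, not_lt.1 hcon⟩
        apply locconst x 0
        filter_upwards [Ioi_mem_nhds hc'] with y hy using hr y (le_of_lt hy)
  · have hx' : (0:ℝ) ≤ x := hx
    have hsm : ∀ᶠ ε : ℝ in nhdsWithin 0 (Ioi 0), ε ∈ Ioo (0:ℝ) 1 :=
      Ioo_mem_nhdsGT one_pos
    rcases hx'.eq_or_lt with rfl | hpos
    · refine tendsto_const_nhds.congr' ?_
      filter_upwards [hsm] with ε hε
      exact ((hG ε hε).2.1 0 hε.1.le).symm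
    · have hlim : Tendsto (fun ε : ℝ => ε * (g x + 1)) (nhdsWithin 0 (Ioi 0)) (nhds 0) := by
        have : Tendsto (fun ε : ℝ => ε * (g x + 1)) (nhds 0) (nhds (0 * (g x + 1))) :=
          tendsto_id.mul_const _
        rw [zero_mul] at this
        exact this.mono_left nhdsWithin_le_nhds
      have hsm2 : ∀ᶠ ε : ℝ in nhdsWithin 0 (Ioi 0), ε ∈ Ioo (0:ℝ) (x / 2) :=
        Ioo_mem_nhdsGT (by positivity)
      have hsm3 : ∀ᶠ ε : ℝ in nhdsWithin 0 (Ioi 0), ε ∈ Ioo (0:ℝ) (1 / x) :=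
        Ioo_mem_nhdsGT (by positivity)
      rw [tendsto_iff_dist_tendsto_zero]
      refine squeeze_zero' (Eventually.of_forall fun _ => dist_nonneg) ?_ hlim
      filter_upwards [hsm, hsm2, hsm3] with ε e1 e2 e3
      rw [Real.dist_eq]
      refine (hG ε e1).2.2.2.2 x (by linarith [e2.2]) ?_
      have := e3.2
      rw [lt_div_iff₀ hpos] at this
      rw [le_div_iff₀ e1.1]
      linarith
end
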